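/- arXiv:2103.11842 — 2 statements merged into one kernel-verified Lean document; each statement's English description precedes it below -/
import Mathlib

section
/- The improper integral over the real line ∫_{−∞}^{∞} (i−3x)/((x−i)⁴(x+i)³) dx, where the integrand is viewed as a function from ℝ to ℂ, equals −π/2. -/
/-!
Since `(x - z)⁻¹ - (x - w)⁻¹ = (z - w) (x - z)⁻¹ (x - w)⁻¹`, the integral of
`(x - z)⁻ᵐ⁻¹ (x - w)⁻ⁿ⁻¹`, with `z` in the upper and `w` in the lower half-plane, satisfies Pascal's
recursion in `(m, n)` up to sign and powers of `z - w`. A single pole of order at least two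
integrates to `0`, and two simple poles give `2πi / (z - w)`, so the integral is
`2πi (-1)ᵐ (m+n choose m) / (z - w)ᵐ⁺ⁿ⁺¹`, which is `2πi` times the residue at `z`. The integrand
of the theorem is a combination of two such functions, because
`i - 3x = -2 (x - i) - (x + i)`.
-/

open Complex MeasureTheory Real

open Filter Topology Asymptotics Bornology

section InvPow

variable {z w : ℂ}

lemma ofReal_sub_ne_zero_of_im_ne_zero (hz : z.im ≠ 0) (x : ℝ) : (x : ℂ) - z ≠ 0 :=
  fun h => hz (by simpa using congrArg Complex.im h)

lemma inv_ofReal_sub_sub_inv_ofReal_sub (hz : z.im ≠ 0) (hw : w.im ≠ 0) (x : ℝ) :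
    ((x : ℂ) - z)⁻¹ - ((x : ℂ) - w)⁻¹ = (z - w) * (((x : ℂ) - z)⁻¹ * ((x : ℂ) - w)⁻¹) := by
  rw [inv_sub_inv (ofReal_sub_ne_zero_of_im_ne_zero hz x) (ofReal_sub_ne_zero_of_im_ne_zero hw x),
    sub_sub_sub_cancel_left, div_eq_mul_inv, mul_inv]

lemma continuous_inv_ofReal_sub (hz : z.im ≠ 0) : Continuous fun x : ℝ => ((x : ℂ) - z)⁻¹ :=
  (continuous_ofReal.sub continuous_const).inv₀ (ofReal_sub_ne_zero_of_im_ne_zero hz)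

lemma tendsto_inv_ofReal_sub_cobounded (z : ℂ) :
    Tendsto (fun x : ℝ => ((x : ℂ) - z)⁻¹) (cobounded ℝ) (𝓝 0) :=
  tendsto_inv₀_cobounded.comp
    ((tendsto_sub_const_cobounded z).comp (RCLike.tendsto_ofReal_cobounded_cobounded ℂ))

lemma hasDerivAt_inv_ofReal_sub_pow (hz : z.im ≠ 0) (n : ℕ) (x : ℝ) :
    HasDerivAt (fun y : ℝ => ((y : ℂ) - z)⁻¹ ^ n) (-n * ((x : ℂ) - z)⁻¹ ^ (n + 1)) x := by
  have hx := ofReal_sub_ne_zero_of_im_ne_zero hz x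
  refine ((((hasDerivAt_id x).ofReal_comp.sub_const z).fun_inv hx).fun_pow n).congr_deriv ?_
  cases n with
  | zero => simp
  | succ n =>
    simp only [id_eq, ofReal_one, Nat.add_sub_cancel, inv_pow]
    field_simp
    ring

lemma isBigO_top_inv_ofReal_sub (hz : z.im ≠ 0) :
    (fun x : ℝ => ((x : ℂ) - z)⁻¹) =O[⊤] fun x => (1 + ‖x‖)⁻¹ := by
  refine IsBigO.inv_rev (.of_bound (1 + (1 + ‖z‖) / |z.im|) (Eventually.of_forall fun x => ?_))
    (Eventually.of_forall fun x h => absurd h (by positivity))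
  have him : 0 < |z.im| := abs_pos.2 hz
  have h_im_le : |z.im| ≤ ‖(x : ℂ) - z‖ := by simpa using abs_im_le_norm ((x : ℂ) - z)
  have h_norm_le : ‖x‖ ≤ ‖(x : ℂ) - z‖ + ‖z‖ := by
    simpa using norm_add_le ((x : ℂ) - z) z
  calc ‖1 + ‖x‖‖ = 1 + ‖x‖ := Real.norm_of_nonneg (by positivity)
    _ ≤ ‖(x : ℂ) - z‖ + (1 + ‖z‖) / |z.im| * |z.im| := by
      rw [div_mul_cancel₀ _ him.ne']; linarith
    _ ≤ ‖(x : ℂ) - z‖ + (1 + ‖z‖) / |z.im| * ‖(x : ℂ) - z‖ := by gcongr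
    _ = (1 + (1 + ‖z‖) / |z.im|) * ‖(x : ℂ) - z‖ := by ring

lemma integrable_inv_ofReal_sub_pow_mul_pow (hz : z.im ≠ 0) (hw : w.im ≠ 0) {m n : ℕ}
    (hmn : 2 ≤ m + n) :
    Integrable fun x : ℝ => ((x : ℂ) - z)⁻¹ ^ m * ((x : ℂ) - w)⁻¹ ^ n := by
  have h_bound := ((isBigO_top_inv_ofReal_sub hz).pow m).mul ((isBigO_top_inv_ofReal_sub hw).pow n)
  refine h_bound.integrable
    (((continuous_inv_ofReal_sub hz).pow m).mul
      ((continuous_inv_ofReal_sub hw).pow n)).aestronglyMeasurable ?_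
  have h_dim : (Module.finrank ℝ ℝ : ℝ) < (m + n : ℕ) := by
    rw [Module.finrank_self]; exact_mod_cast hmn
  refine (integrable_one_add_norm (μ := volume) h_dim).congr (ae_of_all _ fun x => ?_)
  simp only [rpow_neg (by positivity : (0 : ℝ) ≤ 1 + ‖x‖), rpow_natCast, pow_add, mul_inv, inv_pow]

lemma integral_inv_ofReal_sub_pow_eq_zero (hz : z.im ≠ 0) {n : ℕ} (hn : 2 ≤ n) :
    ∫ x : ℝ, ((x : ℂ) - z)⁻¹ ^ n = 0 := by
  obtain ⟨k, rfl⟩ := Nat.exists_eq_add_of_le' hn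
  have h_int : Integrable fun x : ℝ => ((x : ℂ) - z)⁻¹ ^ (k + 2) := by
    simpa using integrable_inv_ofReal_sub_pow_mul_pow hz hz (n := 0) hn
  have h_lim : Tendsto (fun x : ℝ => ((x : ℂ) - z)⁻¹ ^ (k + 1)) (cobounded ℝ) (𝓝 0) := by
    simpa using (tendsto_inv_ofReal_sub_cobounded z).pow (k + 1)
  rw [IsOrderBornology.cobounded_eq, tendsto_sup] at h_lim
  have h_ftc := integral_of_hasDerivAt_of_tendsto (hasDerivAt_inv_ofReal_sub_pow hz (k + 1))
    (h_int.const_mul _) h_lim.1 h_lim.2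
  rw [integral_const_mul, sub_zero] at h_ftc
  exact (mul_eq_zero.1 h_ftc).resolve_left (neg_ne_zero.2 (Nat.cast_ne_zero.2 k.succ_ne_zero))

end InvPow

section SimplePoles

lemma tendsto_log_mul_ofReal_sub_sub_log_atTop {a : ℂ} (ha : a ∈ slitPlane) (z : ℂ) :
    Tendsto (fun x : ℝ => Complex.log (a * (x - z)) - Real.log x) atTop (𝓝 (Complex.log a)) := by
  have h_inv : Tendsto (fun x : ℝ => (x : ℂ)⁻¹) atTop (𝓝 0) := by
    simpa using (tendsto_inv_ofReal_sub_cobounded 0).mono_left IsOrderBornology.atTop_le_cobounded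
  have h_lim : Tendsto (fun x : ℝ => a * (1 - z * (x : ℂ)⁻¹)) atTop (𝓝 a) := by
    simpa using ((h_inv.const_mul z).const_sub 1).const_mul a
  refine (h_lim.clog ha).congr' ?_
  filter_upwards [eventually_gt_atTop 0,
    h_lim.eventually_ne (slitPlane_ne_zero ha)] with x hx h_ne
  have h_factor : a * (x - z) = x * (a * (1 - z * (x : ℂ)⁻¹)) := by
    have : (x : ℂ) ≠ 0 := ofReal_ne_zero.2 hx.ne'
    field_simp
  rw [h_factor, log_ofReal_mul hx h_ne, add_sub_cancel_left]

lemma tendsto_log_mul_ofReal_sub_sub_log_atBot {a : ℂ} (ha : -a ∈ slitPlane) (z : ℂ) :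
    Tendsto (fun x : ℝ => Complex.log (a * (x - z)) - Real.log x) atBot
      (𝓝 (Complex.log (-a))) := by
  refine ((tendsto_log_mul_ofReal_sub_sub_log_atTop ha (-z)).comp
    tendsto_neg_atBot_atTop).congr fun x => ?_
  have h_arg : -a * (((-x : ℝ) : ℂ) - -z) = a * (x - z) := by push_cast; ring
  simp only [Function.comp_apply, h_arg, Real.log_neg_eq_log]

lemma hasDerivAt_log_mul_ofReal_sub {a z : ℂ} {x : ℝ} (h : a * (x - z) ∈ slitPlane) :
    HasDerivAt (fun y : ℝ => Complex.log (a * (y - z))) ((x - z)⁻¹ : ℂ) x := by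
  refine ((((hasDerivAt_id x).ofReal_comp.sub_const z).const_mul a).clog_real h).congr_deriv ?_
  have ha : a ≠ 0 := left_ne_zero_of_mul (slitPlane_ne_zero h)
  simp only [id, ofReal_one, mul_one, div_mul_cancel_left₀ ha]

variable {z w : ℂ}

lemma integral_inv_ofReal_sub_mul_inv_ofReal_sub (hz : 0 < z.im) (hw : w.im < 0) :
    ∫ x : ℝ, ((x : ℂ) - z)⁻¹ * ((x : ℂ) - w)⁻¹ = 2 * π * I / (z - w) := by
  have hzw : z - w ≠ 0 := sub_ne_zero.2 (ne_of_apply_ne Complex.im (hw.trans hz).ne')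
  have h_int : Integrable fun x : ℝ => ((x : ℂ) - z)⁻¹ * ((x : ℂ) - w)⁻¹ := by
    simpa using integrable_inv_ofReal_sub_pow_mul_pow hz.ne' hw.ne (m := 1) (n := 1) le_rfl
  -- The factors `±I` rotate both lines into the right half-plane, away from the branch cut.
  let F (x : ℝ) : ℂ := Complex.log (I * (x - z)) - Complex.log (-I * (x - w))
  have h_deriv (x : ℝ) : HasDerivAt F ((z - w) * (((x : ℂ) - z)⁻¹ * ((x : ℂ) - w)⁻¹)) x := by
    have hxz : I * (x - z) ∈ slitPlane := .inl (by simpa using hz)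
    have hxw : -I * (x - w) ∈ slitPlane := .inl (by simpa using hw)
    rw [← inv_ofReal_sub_sub_inv_ofReal_sub hz.ne' hw.ne]
    exact (hasDerivAt_log_mul_ofReal_sub hxz).sub (hasDerivAt_log_mul_ofReal_sub hxw)
  have hI : I ∈ slitPlane := .inr (by simp)
  have hnegI : -I ∈ slitPlane := .inr (by simp)
  have h_top : Tendsto F atTop (𝓝 (Complex.log I - Complex.log (-I))) :=
    ((tendsto_log_mul_ofReal_sub_sub_log_atTop hI z).sub
      (tendsto_log_mul_ofReal_sub_sub_log_atTop hnegI w)).congr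
      fun _ => sub_sub_sub_cancel_right _ _ _
  have h_bot : Tendsto F atBot (𝓝 (Complex.log (-I) - Complex.log (- -I))) :=
    ((tendsto_log_mul_ofReal_sub_sub_log_atBot hnegI z).sub
      (tendsto_log_mul_ofReal_sub_sub_log_atBot ((neg_neg I).symm ▸ hI) w)).congr
      fun _ => sub_sub_sub_cancel_right _ _ _
  have h_ftc := integral_of_hasDerivAt_of_tendsto h_deriv (h_int.const_mul _) h_bot h_top
  rw [integral_const_mul, neg_neg, log_I, log_neg_I] at h_ftc
  rw [eq_div_iff hzw, mul_comm, h_ftc]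
  ring

end SimplePoles

section TwoPoles

variable {z w : ℂ}

lemma integral_inv_ofReal_sub_pow_succ_mul_pow_succ (hz : z.im ≠ 0) (hw : w.im ≠ 0) (hzw : z ≠ w)
    {m n : ℕ} (hmn : 1 ≤ m + n) :
    ∫ x : ℝ, ((x : ℂ) - z)⁻¹ ^ (m + 1) * ((x : ℂ) - w)⁻¹ ^ (n + 1) =
      ((∫ x : ℝ, ((x : ℂ) - z)⁻¹ ^ (m + 1) * ((x : ℂ) - w)⁻¹ ^ n) -
        ∫ x : ℝ, ((x : ℂ) - z)⁻¹ ^ m * ((x : ℂ) - w)⁻¹ ^ (n + 1)) / (z - w) := by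
  rw [← integral_sub (integrable_inv_ofReal_sub_pow_mul_pow hz hw (by lia))
    (integrable_inv_ofReal_sub_pow_mul_pow hz hw (by lia)), ← integral_div]
  refine integral_congr_ae (ae_of_all _ fun x => ?_)
  rw [eq_div_iff (sub_ne_zero.2 hzw)]
  linear_combination -((x : ℂ) - z)⁻¹ ^ m * ((x : ℂ) - w)⁻¹ ^ n *
    inv_ofReal_sub_sub_inv_ofReal_sub hz hw x

theorem integral_inv_ofReal_sub_pow_mul_pow (hz : 0 < z.im) (hw : w.im < 0) (m n : ℕ) :
    ∫ x : ℝ, ((x : ℂ) - z)⁻¹ ^ (m + 1) * ((x : ℂ) - w)⁻¹ ^ (n + 1) =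
      2 * π * I * (-1) ^ m * (m + n).choose m / (z - w) ^ (m + n + 1) := by
  have hzw : z ≠ w := ne_of_apply_ne Complex.im (hw.trans hz).ne'
  have hsub : z - w ≠ 0 := sub_ne_zero.2 hzw
  have h_rec {m n : ℕ} (hmn : 1 ≤ m + n) :=
    integral_inv_ofReal_sub_pow_succ_mul_pow_succ hz.ne' hw.ne hzw hmn
  induction m generalizing n with
  | zero =>
    induction n with
    | zero => simpa using integral_inv_ofReal_sub_mul_inv_ofReal_sub hz hw
    | succ n ih =>
      rw [h_rec (by lia), ih]
      simp only [pow_zero, one_mul, zero_add, Nat.choose_zero_right, sub_zero,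
        integral_inv_ofReal_sub_pow_eq_zero hw.ne (by lia : 2 ≤ n + 1 + 1)]
      field_simp
      ring
  | succ m ihm =>
    induction n with
    | zero =>
      rw [h_rec (by lia), ihm]
      simp only [pow_zero, mul_one, add_zero, Nat.choose_self, Nat.cast_one, zero_sub,
        integral_inv_ofReal_sub_pow_eq_zero hz.ne' (by lia : 2 ≤ m + 1 + 1)]
      field_simp
      ring
    | succ n ihn =>
      have h_pascal : (m + 1 + (n + 1)).choose (m + 1) =
          (m + (n + 1)).choose m + (m + 1 + n).choose (m + 1) := by
        rw [show m + 1 + (n + 1) = m + (n + 1) + 1 by ring, Nat.choose_succ_succ,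
          show m + (n + 1) = m + 1 + n by ring]
      rw [h_rec (by lia), ihm, ihn, h_pascal]
      push_cast
      field_simp
      ring

end TwoPoles

lemma I_sub_three_mul_div_eq_sub (x : ℝ) :
    (I - 3 * (x : ℂ)) / (((x : ℂ) - I) ^ 4 * ((x : ℂ) + I) ^ 3) =
      -2 * (((x : ℂ) - I)⁻¹ ^ 3 * ((x : ℂ) - -I)⁻¹ ^ 3) -
        ((x : ℂ) - I)⁻¹ ^ 4 * ((x : ℂ) - -I)⁻¹ ^ 2 := by
  have h_sub : (x : ℂ) - I ≠ 0 := ofReal_sub_ne_zero_of_im_ne_zero (by simp) x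
  have h_add : (x : ℂ) - -I ≠ 0 := ofReal_sub_ne_zero_of_im_ne_zero (by simp) x
  rw [sub_neg_eq_add] at h_add ⊢
  field_simp
  ring

theorem stmt_5 :
    ∫ x : ℝ, (I - 3 * (x : ℂ)) / (((x : ℂ) - I) ^ 4 * ((x : ℂ) + I) ^ 3) = -(π : ℂ) / 2 := by
  have h_im : 0 < I.im := by simp
  have h_neg : (-I).im < 0 := by simp
  have h_pow : (I - -I) ^ 5 = 32 * I := by linear_combination 32 * I * (I ^ 2 - 1) * I_sq
  have h_three_three : ∫ x : ℝ, ((x : ℂ) - I)⁻¹ ^ 3 * ((x : ℂ) - -I)⁻¹ ^ 3 = 3 * π / 8 := by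
    rw [integral_inv_ofReal_sub_pow_mul_pow h_im h_neg 2 2, h_pow,
      show Nat.choose (2 + 2) 2 = 6 from rfl]
    push_cast
    field_simp
    norm_num
  have h_four_two : ∫ x : ℝ, ((x : ℂ) - I)⁻¹ ^ 4 * ((x : ℂ) - -I)⁻¹ ^ 2 = -π / 4 := by
    rw [integral_inv_ofReal_sub_pow_mul_pow h_im h_neg 3 1, h_pow,
      show Nat.choose (3 + 1) 3 = 4 from rfl]
    push_cast
    field_simp
    norm_num
  simp_rw [I_sub_three_mul_div_eq_sub]
  rw [integral_sub
      ((integrable_inv_ofReal_sub_pow_mul_pow h_im.ne' h_neg.ne (by lia)).const_mul _)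
      (integrable_inv_ofReal_sub_pow_mul_pow h_im.ne' h_neg.ne (by lia)),
    integral_const_mul, h_three_three, h_four_two]
  ring
end

section
/- The improper integral over the real line ∫_{−∞}^{∞} (3ix³+5x²−3ix−1)/((x−i)⁶(x+i)⁴) dx, where the integrand is viewed as a function from ℝ to ℂ, equals 15π/64. -/
/-!
The numerator vanishes at `x = i`, so the pole there has order `5` only. Among the partial fractions
of the integrand, the two simple ones combine to `(15/64) (1 + x²)⁻¹`, whose integral is `15π/64`.
The others are multiples of `(x ∓ i)ⁿ` with `n ≤ -2` and contribute nothing: such a power has the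
primitive `(x ∓ i)ⁿ⁺¹ / (n + 1)`, which vanishes at both ends of the line.
-/

open Complex MeasureTheory Real

section NonrealShift

open Bornology Filter Topology

variable {w : ℂ} {n : ℤ}

lemma ofReal_sub_ne_zero (hw : w.im ≠ 0) (x : ℝ) : (x : ℂ) - w ≠ 0 := fun h =>
  hw (by simpa using congrArg im h)

lemma hasDerivAt_ofReal_sub_zpow {x : ℝ} (hx : (x : ℂ) - w ≠ 0) (hn : n ≠ -1) :
    HasDerivAt (fun t : ℝ => ((t : ℂ) - w) ^ (n + 1) / (n + 1)) (((x : ℂ) - w) ^ n) x := by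
  have hn' : (n : ℂ) + 1 ≠ 0 := by exact_mod_cast fun h => hn (eq_neg_of_add_eq_zero_left h)
  have hpow := hasDerivAt_zpow (n + 1) ((x : ℂ) - w) (.inl hx)
  refine ((hpow.comp_sub_const (x : ℂ) w).comp_ofReal.div_const _).congr_deriv ?_
  rw [add_sub_cancel_right, Int.cast_add, Int.cast_one, mul_div_cancel_left₀ _ hn']

lemma tendsto_ofReal_sub_zpow_cobounded (w : ℂ) (hn : n < 0) :
    Tendsto (fun x : ℝ => ((x : ℂ) - w) ^ n) (cobounded ℝ) (𝓝 0) := by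
  have hshift : Tendsto (fun x : ℝ => (x : ℂ) - w) (cobounded ℝ) (cobounded ℂ) :=
    (tendsto_sub_const_cobounded w).comp (RCLike.tendsto_ofReal_cobounded_cobounded (𝕜 := ℂ))
  rw [tendsto_zero_iff_norm_tendsto_zero]
  simpa only [norm_zpow, Function.comp_def] using
    (tendsto_zpow_atTop_zero hn).comp (tendsto_norm_cobounded_atTop.comp hshift)

lemma integrable_norm_ofReal_sub_zpow_neg_two (hw : w.im ≠ 0) :
    Integrable fun x : ℝ => ‖(x : ℂ) - w‖ ^ (-2 : ℤ) := by
  have h := ((integrable_inv_one_add_sq.comp_div hw).comp_sub_right w.re).const_mul (w.im ^ 2)⁻¹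
  refine h.congr (.of_forall fun x => ?_)
  have hsq : ‖(x : ℂ) - w‖ ^ 2 = w.im ^ 2 * (1 + ((x - w.re) / w.im) ^ 2) := by
    rw [Complex.sq_norm, normSq_apply]
    simp only [sub_re, sub_im, ofReal_re, ofReal_im]
    field_simp
    ring
  simp only [zpow_neg, zpow_ofNat, hsq, mul_inv]

lemma integrable_ofReal_sub_zpow (hw : w.im ≠ 0) (hn : n < -1) :
    Integrable fun x : ℝ => ((x : ℂ) - w) ^ n := by
  have hcont : Continuous fun x : ℝ => ((x : ℂ) - w) ^ n :=
    (continuous_ofReal.sub continuous_const).zpow₀ n fun x => .inl (ofReal_sub_ne_zero hw x)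
  refine ((integrable_norm_ofReal_sub_zpow_neg_two hw).const_mul (|w.im| ^ (n + 2))).mono'
    hcont.aestronglyMeasurable (.of_forall fun x => ?_)
  have him : |w.im| ≤ ‖(x : ℂ) - w‖ := by simpa using abs_im_le_norm ((x : ℂ) - w)
  have hpos : 0 < ‖(x : ℂ) - w‖ := (abs_pos.2 hw).trans_le him
  calc ‖((x : ℂ) - w) ^ n‖ = ‖(x : ℂ) - w‖ ^ (n + 2) * ‖(x : ℂ) - w‖ ^ (-2 : ℤ) := by
        rw [norm_zpow, ← zpow_add₀ hpos.ne', add_neg_cancel_right]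
    _ ≤ |w.im| ^ (n + 2) * ‖(x : ℂ) - w‖ ^ (-2 : ℤ) := by
        gcongr ?_ * _
        simpa only [zpow_neg, inv_inv] using inv_anti₀ (zpow_pos (abs_pos.2 hw) (-(n + 2)))
          (zpow_le_zpow_left₀ (by lia) (abs_nonneg _) him)

lemma integral_ofReal_sub_zpow (hw : w.im ≠ 0) (hn : n < -1) :
    ∫ x : ℝ, ((x : ℂ) - w) ^ n = 0 := by
  have hlim : Tendsto (fun x : ℝ => ((x : ℂ) - w) ^ (n + 1) / (n + 1)) (cobounded ℝ) (𝓝 0) := by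
    simpa using (tendsto_ofReal_sub_zpow_cobounded w (by lia : n + 1 < 0)).div_const (n + 1 : ℂ)
  simpa using integral_of_hasDerivAt_of_tendsto
    (fun x => hasDerivAt_ofReal_sub_zpow (ofReal_sub_ne_zero hw x) hn.ne)
    (integrable_ofReal_sub_zpow hw hn) (hlim.mono_left IsOrderBornology.atBot_le_cobounded)
    (hlim.mono_left IsOrderBornology.atTop_le_cobounded)

end NonrealShift

lemma integrable_inv_one_add_ofReal_sq : Integrable fun x : ℝ => (1 + (x : ℂ) ^ 2)⁻¹ := by
  simpa using integrable_inv_one_add_sq.ofReal (𝕜 := ℂ)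

lemma integral_inv_one_add_ofReal_sq : ∫ x : ℝ, (1 + (x : ℂ) ^ 2)⁻¹ = (π : ℂ) := by
  simpa using integral_complex_ofReal.trans (congrArg ofReal integral_univ_inv_one_add_sq)

lemma integrand_eq_partial_fractions {z : ℂ} (hz : z - I ≠ 0) (hz' : z + I ≠ 0) :
    (3 * I * z ^ 3 + 5 * z ^ 2 - 3 * I * z - 1) / ((z - I) ^ 6 * (z + I) ^ 4) =
      15 / 64 * (1 + z ^ 2)⁻¹
        + (-I / 8 * (z - I) ^ (-5 : ℤ) - 1 / 16 * (z - I) ^ (-2 : ℤ))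
        + (3 / 16 * (z - -I) ^ (-4 : ℤ) - 7 * I / 32 * (z - -I) ^ (-3 : ℤ)
          - 11 / 64 * (z - -I) ^ (-2 : ℤ)) := by
  have hfactor : 1 + z ^ 2 = (z - I) * (z + I) := by linear_combination I_sq
  have hnum : 3 * I * z ^ 3 + 5 * z ^ 2 - 3 * I * z - 1 =
      (z - I) * (3 * I * z ^ 2 + 2 * z - I) := by
    linear_combination (3 * z ^ 2 - 1) * I_sq
  rw [hfactor, hnum, sub_neg_eq_add]
  field_simp
  grind [I_sq]

theorem stmt_10 :
    ∫ x : ℝ, (3 * I * (x : ℂ) ^ 3 + 5 * (x : ℂ) ^ 2 - 3 * I * (x : ℂ) - 1) / (((x : ℂ) - I) ^ 6 * ((x : ℂ) + I) ^ 4) = 15 * (π : ℂ) / 64 := by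
  have hI : I.im ≠ 0 := by simp
  have hI' : (-I).im ≠ 0 := by simp
  have hpartial (x : ℝ) := integrand_eq_partial_fractions (ofReal_sub_ne_zero hI x)
    (sub_neg_eq_add (x : ℂ) I ▸ ofReal_sub_ne_zero hI' x)
  have hcauchy := integrable_inv_one_add_ofReal_sq
  have hpole₅ := integrable_ofReal_sub_zpow hI (n := -5) (by lia)
  have hpole₂ := integrable_ofReal_sub_zpow hI (n := -2) (by lia)
  have hpole₄' := integrable_ofReal_sub_zpow hI' (n := -4) (by lia)
  have hpole₃' := integrable_ofReal_sub_zpow hI' (n := -3) (by lia)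
  have hpole₂' := integrable_ofReal_sub_zpow hI' (n := -2) (by lia)
  simp_rw [hpartial]
  rw [integral_add (by fun_prop) (by fun_prop), integral_add (by fun_prop) (by fun_prop),
    integral_sub (by fun_prop) (by fun_prop), integral_sub (by fun_prop) (by fun_prop),
    integral_sub (by fun_prop) (by fun_prop)]
  simp only [integral_const_mul, integral_inv_one_add_ofReal_sq, integral_ofReal_sub_zpow hI,
    integral_ofReal_sub_zpow hI', Int.reduceNeg, Int.reduceLT]
  ring
end
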